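/- Let G be a finite group. The power graph of G is chordal if and only if the power graph neither admits a graph embedding of the cycle graph on n vertices for any n with 4 ≤ n ≤ 20, nor admits a graph embedding of the path graph on 20 vertices. -/

import Mathlib

/-- The power graph of a group: distinct `x` and `y` are adjacent iff one is a power
of the other. -/
def powerGraph (G : Type*) [Group G] : SimpleGraph G :=
  SimpleGraph.fromRel (fun x y => x ∈ Subgroup.zpowers y)

/-- A graph is chordal if it has no induced cycle on at least 4 vertices. -/
def IsChordal {V : Type*} (Γ : SimpleGraph V) : Prop :=
  ∀ n : ℕ, 4 ≤ n → IsEmpty (SimpleGraph.cycleGraph n ↪g Γ)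


lemma cyc_mem_aux {A : Type*} [Group A] [Finite A] [IsCyclic A] (a b : A)
    (h : orderOf a ∣ orderOf b) : a ∈ Subgroup.zpowers b := by
  classical
  cases nonempty_fintype A
  have h1 : (Finset.univ.filter fun x : A => x ^ orderOf b = 1).card ≤ orderOf b :=
    IsCyclic.card_pow_eq_one_le (orderOf_pos b)
  have h2 : (Finset.univ.filter fun x : A => x ∈ Subgroup.zpowers b).card = orderOf b := by
    rw [← Nat.card_zpowers, Nat.card_eq_fintype_card, Fintype.card_subtype]
  have h3 : (Finset.univ.filter fun x : A => x ∈ Subgroup.zpowers b) ⊆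
      (Finset.univ.filter fun x : A => x ^ orderOf b = 1) := by
    intro x hx
    simp only [Finset.mem_filter, Finset.mem_univ, true_and] at hx ⊢
    exact orderOf_dvd_iff_pow_eq_one.1 (orderOf_dvd_of_mem_zpowers hx)
  have h4 := Finset.eq_of_subset_of_card_le h3 (by omega)
  have : a ∈ (Finset.univ.filter fun x : A => x ^ orderOf b = 1) := by
    simp only [Finset.mem_filter, Finset.mem_univ, true_and]
    exact orderOf_dvd_iff_pow_eq_one.1 h
  rw [← h4] at this
  simpa using this

lemma cyc_mem {G : Type*} [Group G] [Finite G] {t a b : G} (ha : a ∈ Subgroup.zpowers t)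
    (hb : b ∈ Subgroup.zpowers t) (h : orderOf a ∣ orderOf b) : a ∈ Subgroup.zpowers b := by
  have := cyc_mem_aux (A := Subgroup.zpowers t) ⟨a, ha⟩ ⟨b, hb⟩ (by simpa using h)
  obtain ⟨k, hk⟩ := Subgroup.mem_zpowers_iff.1 this
  exact Subgroup.mem_zpowers_iff.2 ⟨k, by simpa using congrArg Subtype.val hk⟩

lemma exists_phi {G : Type*} [Group G] [Finite G] (A : Subgroup G) {r : ℕ} (hr : r.Prime)
    (hA : Nat.card A = r) :
    ∃ φ : Subgroup.normalizer (A : Set G) →* (ZMod r)ˣ,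
      ∀ n, φ n = 1 ↔ ∀ a ∈ A, a * n = n * a := by
  have := Fact.mk hr
  have : IsCyclic A := isCyclic_of_prime_card hA
  subst hA
  refine ⟨(IsCyclic.mulAutMulEquiv A).toMonoidHom.comp A.normalizerMonoidHom, fun n => ?_⟩
  have h : A.normalizerMonoidHom n = 1 ↔
      n ∈ (Subgroup.centralizer (A : Set G)).subgroupOf (Subgroup.normalizer (A : Set G)) := by
    rw [← Subgroup.normalizerMonoidHom_ker, MonoidHom.mem_ker]
  simp [h, Subgroup.mem_subgroupOf, Subgroup.mem_centralizer_iff]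

/-- The prime graph on subgroups. -/
def FG (G : Type*) [Group G] : SimpleGraph (Subgroup G) where
  Adj A B := (Nat.card A).Prime ∧ (Nat.card B).Prime ∧ Nat.card A ≠ Nat.card B ∧
    ∀ a ∈ A, ∀ b ∈ B, a * b = b * a
  symm := ⟨fun _ _ ⟨h1, h2, h3, h4⟩ => ⟨h2, h1, h3.symm, fun a ha b hb => (h4 b hb a ha).symm⟩⟩
  loopless := ⟨fun _ h => h.2.2.1 rfl⟩

lemma mem_prime_gen {G : Type*} [Group G] {A : Subgroup G} (hA : (Nat.card A).Prime) {x : G}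
    (hx : x ∈ A) (h1 : x ≠ 1) : Subgroup.zpowers x = A := by
  have := Fact.mk hA
  have : Finite A := Nat.finite_of_card_ne_zero hA.ne_zero
  apply Subgroup.eq_of_le_of_card_ge (by simpa using hx)
  rw [Nat.card_zpowers]
  have : orderOf (⟨x, hx⟩ : A) ∣ Nat.card A := orderOf_dvd_natCard _
  rw [Subgroup.orderOf_mk] at this
  rcases (Nat.dvd_prime hA).1 this with h | h
  · exact absurd (orderOf_eq_one_iff.1 h) h1
  · exact h.ge

lemma exists_prime_gen {G : Type*} [Group G] {A : Subgroup G} (hA : (Nat.card A).Prime) :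
    ∃ x ∈ A, x ≠ 1 ∧ orderOf x = Nat.card A ∧ Subgroup.zpowers x = A := by
  obtain ⟨x, hx, h1⟩ := A.bot_or_exists_ne_one.resolve_left (by
    rintro rfl; simp [Nat.not_prime_one] at hA)
  have := mem_prime_gen hA hx h1
  exact ⟨x, hx, h1, by rw [← Nat.card_zpowers, this], this⟩

lemma commute_zpowers {G : Type*} [Group G] {x y : G} (h : x * y = y * x) :
    ∀ a ∈ Subgroup.zpowers x, ∀ b ∈ Subgroup.zpowers y, a * b = b * a := by
  rintro a ⟨k, rfl⟩ b ⟨l, rfl⟩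
  exact (Commute.zpow_zpow (show Commute x y from h) k l)

/-- The final contradiction. -/
lemma final_contra {G : Type*} [Group G] [Finite G] (U : ℕ → Subgroup G) (h : Subgroup G → ℕ)
    (hUadj : ∀ i < 5, (FG G).Adj (U i) (U (i + 1)))
    (hh : ∀ i ≤ 5, h (U i) = h (U 0) + i)
    (hstep : ∀ i ≤ 5, ∀ B, (FG G).Adj (U i) B → h B ≤ h (U i) + 1 ∧ h (U i) ≤ h B + 1)
    (hN : ∀ i j, i ≤ j → j ≤ 5 → U j ≤ Subgroup.normalizer (U i : Set G)) : False := by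
  have hp : ∀ i ≤ 5, (Nat.card (U i)).Prime := by
    intro i hi
    rcases Nat.lt_or_ge i 5 with h | h
    · exact (hUadj i h).1
    · obtain rfl : i = 5 := by omega
      exact (hUadj 4 (by norm_num)).2.1
  have h34 := hUadj 3 (by norm_num)
  have h45 := hUadj 4 (by norm_num)
  obtain ⟨m, hm, hmp⟩ : ∃ m ≤ 1, Nat.card (U m) ≠ Nat.card (U 3) := by
    by_contra! hc
    exact (hUadj 0 (by norm_num)).2.2.1 ((hc 0 (by norm_num)).trans (hc 1 le_rfl).symm)
  have hnotm : ∀ x ∈ U 3, x ≠ 1 → ¬ ∀ a ∈ U m, a * x = x * a := by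
    intro x hx hx1 hc
    have : (FG G).Adj (U m) (U 3) := by
      refine ⟨hp m (by omega), hp 3 (by omega), hmp, fun a ha b hb => ?_⟩
      rw [← mem_prime_gen (hp 3 (by omega)) hx hx1] at hb
      obtain ⟨k, rfl⟩ := hb
      exact (Commute.zpow_right (show Commute a x from hc a ha) k)
    have h1 := hstep m (by omega) _ this
    have h2 := hh m (by omega)
    have h3 := hh 3 (by omega)
    omega
  obtain ⟨φ, hφ⟩ := exists_phi (U m) (hp m (by omega)) rfl
  obtain ⟨x, hx, hx1, hxo, hxg⟩ := exists_prime_gen (hp 3 (by omega))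
  obtain ⟨y, hy, hy1, hyo, hyg⟩ := exists_prime_gen (hp 5 (by omega))
  have hxN := hN m 3 (by omega) (by omega) hx
  have hyN := hN m 5 (by omega) (by omega) hy
  -- x and y commute
  have hxy : y * x = x * y := by
    have hc : y * x * y⁻¹ * x⁻¹ ∈ U 3 := by
      refine mul_mem ?_ (inv_mem hx)
      exact (Subgroup.mem_normalizer_iff.1 (hN 3 5 (by omega) le_rfl hy) x).1 hx
    by_contra hne
    have hc1 : y * x * y⁻¹ * x⁻¹ ≠ 1 := by
      intro h1
      apply hne
      have : y * x = (y * x * y⁻¹ * x⁻¹) * (x * y) := by group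
      rw [this, h1, one_mul]
    apply hnotm _ hc hc1
    have := (hφ (⟨y, hyN⟩ * ⟨x, hxN⟩ * ⟨y, hyN⟩⁻¹ * ⟨x, hxN⟩⁻¹)).1 (by
      simp only [map_mul, map_inv]
      rw [mul_comm (φ ⟨y, hyN⟩)]; simp)
    simpa using this
  by_cases hpe : Nat.card (U 5) = Nat.card (U 3)
  · have := Fact.mk (hp m (by omega))
    have h3p := hp 3 (by omega)
    have hαo : orderOf (φ ⟨x, hxN⟩) = Nat.card (U 3) := by
      have : orderOf (φ ⟨x, hxN⟩) ∣ orderOf x := by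
        have := orderOf_map_dvd φ ⟨x, hxN⟩
        rwa [Subgroup.orderOf_mk] at this
      rw [hxo] at this
      rcases (Nat.dvd_prime h3p).1 this with h | h
      · exact absurd ((hφ _).1 (orderOf_eq_one_iff.1 h)) (hnotm x hx hx1)
      · exact h
    have hβo : orderOf (φ ⟨y, hyN⟩) ∣ orderOf (φ ⟨x, hxN⟩) := by
      rw [hαo, ← hpe, ← hyo]
      have := orderOf_map_dvd φ ⟨y, hyN⟩
      rwa [Subgroup.orderOf_mk] at this
    obtain ⟨k, hk⟩ := Subgroup.mem_zpowers_iff.1 (cyc_mem_aux _ _ hβo)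
    set w := y * x ^ (-k) with hw
    have hwm : ∀ a ∈ U m, a * w = w * a := by
      have := (hφ (⟨y, hyN⟩ * ⟨x, hxN⟩ ^ (-k))).1 (by
        simp only [map_mul, map_zpow, ← hk]; simp)
      simpa [hw] using this
    have hU35 : U 3 ≠ U 5 := by
      intro he
      have := hh 3 (by omega)
      rw [he, hh 5 (by omega)] at this
      omega
    have hw1 : w ≠ 1 := by
      intro h1
      apply hU35
      have : y = x ^ k := by
        rw [hw, zpow_neg] at h1
        exact mul_inv_eq_one.1 h1
      have hy3 : y ∈ U 3 := this ▸ zpow_mem hx k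
      rw [← hyg, mem_prime_gen h3p hy3 hy1]
    have hwo : orderOf w = Nat.card (U 3) := by
      have := Fact.mk h3p
      apply orderOf_eq_prime _ hw1
      have hcm : Commute y (x ^ (-k)) := Commute.zpow_right hxy _
      rw [hw, hcm.mul_pow, ← zpow_natCast (x ^ (-k)), ← zpow_mul, mul_comm, zpow_mul,
        zpow_natCast, ← hxo, pow_orderOf_eq_one, hxo, ← hpe, ← hyo, pow_orderOf_eq_one]
      simp
    have hWc : Nat.card (Subgroup.zpowers w) = Nat.card (U 3) := by rw [Nat.card_zpowers, hwo]
    have a1 : (FG G).Adj (U m) (Subgroup.zpowers w) := by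
      refine ⟨hp m (by omega), hWc ▸ h3p, hWc ▸ hmp, fun a ha b hb => ?_⟩
      obtain ⟨k, rfl⟩ := hb
      exact (Commute.zpow_right (show Commute a w from hwm a ha) k)
    have a2 : (FG G).Adj (U 4) (Subgroup.zpowers w) := by
      refine ⟨hp 4 (by omega), hWc ▸ h3p, hWc ▸ h34.2.2.1.symm, fun a ha b hb => ?_⟩
      obtain ⟨l, rfl⟩ := hb
      have c1 : Commute a y := h45.2.2.2 a ha y hy
      have c2 : Commute a x := (h34.2.2.2 x hx a ha).symm
      exact Commute.zpow_right (c1.mul_right (c2.zpow_right _)) l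
    have b1 := hstep m (by omega) _ a1
    have b2 := hstep 4 (by omega) _ a2
    have b3 := hh m (by omega)
    have b4 := hh 4 (by omega)
    omega
  · have : (FG G).Adj (U 5) (U 3) := by
      refine ⟨hp 5 le_rfl, hp 3 (by omega), hpe, ?_⟩
      rw [← hxg, ← hyg]
      exact commute_zpowers hxy
    have b1 := hstep 5 (by omega) _ this
    have b3 := hh 3 (by omega)
    have b4 := hh 5 (by omega)
    omega

lemma parent_unique {V : Type*} {Γ : SimpleGraph V} (hG : Γ.IsAcyclic) {u x y z : V}
    (hr : Γ.Reachable u x) (hy : Γ.Adj x y) (hz : Γ.Adj x z)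
    (h1 : Γ.dist u x = Γ.dist u y + 1) (h2 : Γ.dist u x = Γ.dist u z + 1) : y = z := by
  obtain ⟨p, _, hpl⟩ := (hr.trans hy.reachable).exists_path_of_dist
  obtain ⟨q, _, hql⟩ := (hr.trans hz.reachable).exists_path_of_dist
  have e1 : (p.concat hy.symm).IsPath :=
    SimpleGraph.Walk.isPath_of_length_eq_dist _ (by rw [SimpleGraph.Walk.length_concat]; omega)
  have e2 : (q.concat hz.symm).IsPath :=
    SimpleGraph.Walk.isPath_of_length_eq_dist _ (by rw [SimpleGraph.Walk.length_concat]; omega)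
  have := congrArg Subtype.val ((hG.subsingleton_path u x).elim ⟨_, e1⟩ ⟨_, e2⟩)
  have := congrArg SimpleGraph.Walk.penultimate this
  simpa using this

lemma dist_mono {V : Type*} {Γ : SimpleGraph V} (hG : Γ.IsAcyclic) {u : V} (n : ℕ) (s : ℕ → V)
    (hr : Γ.Reachable u (s 0))
    (hs : ∀ i < n, Γ.Adj (s i) (s (i + 1))) (hb : ∀ i, i + 2 ≤ n → s i ≠ s (i + 2))
    (h1 : Γ.dist u (s 1) = Γ.dist u (s 0) + 1) :
    ∀ i ≤ n, Γ.dist u (s i) = Γ.dist u (s 0) + i := by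
  have hreach : ∀ i ≤ n, Γ.Reachable u (s i) := by
    intro i
    induction i with
    | zero => intro _; exact hr
    | succ k ih => intro hk; exact (ih (by omega)).trans (hs k (by omega)).reachable
  intro i
  induction i using Nat.strong_induction_on with
  | _ i ih =>
    intro hi
    match i, ih, hi with
    | 0, _, _ => rfl
    | 1, _, _ => exact h1
    | k + 2, ih, hi =>
      have a1 := ih k (by omega) (by omega)
      have a2 := ih (k + 1) (by omega) (by omega)
      rcases hG.dist_eq_dist_add_one_of_adj_of_reachable u (hs (k + 1) (by omega))
        (hreach (k + 1) (by omega)) with h | h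
      · exfalso
        apply hb k hi
        exact parent_unique hG (hreach (k + 1) (by omega)) (hs k (by omega)).symm
          (hs (k + 1) (by omega)) (by omega) h
      · have h : Γ.dist u (s (k + 2)) = Γ.dist u (s (k + 1)) + 1 := h
        omega

lemma dist_iso {V : Type*} {Γ : SimpleGraph V} (f : Γ ≃g Γ) (u v : V)
    (hr : Γ.Reachable u v) : Γ.dist (f u) (f v) ≤ Γ.dist u v := by
  obtain ⟨p, hp⟩ := hr.exists_walk_length_eq_dist
  rw [← hp, ← SimpleGraph.Walk.length_map f.toHom p]
  exact SimpleGraph.dist_le _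

lemma dist_iso_eq {V : Type*} {Γ : SimpleGraph V} (f : Γ ≃g Γ) (u v : V) :
    Γ.dist (f u) (f v) = Γ.dist u v := by
  by_cases hr : Γ.Reachable u v
  · apply le_antisymm (dist_iso f u v hr)
    have := dist_iso f.symm (f u) (f v) (hr.map f.toHom)
    simpa using this
  · rw [SimpleGraph.dist_eq_zero_of_not_reachable hr, SimpleGraph.dist_eq_zero_of_not_reachable]
    intro h
    apply hr
    simpa using h.map f.symm.toHom

/-- eccentricity -/
noncomputable def ecc {V : Type*} [Fintype V] (Γ : SimpleGraph V) (v : V) : ℕ :=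
  Finset.univ.sup fun x => Γ.dist v x

lemma ecc_iso {V : Type*} [Fintype V] {Γ : SimpleGraph V} (f : Γ ≃g Γ) (v : V) :
    ecc Γ (f v) = ecc Γ v := by
  have key : ∀ (f : Γ ≃g Γ) (v : V), ecc Γ v ≤ ecc Γ (f v) := by
    intro f v
    apply Finset.sup_le
    intro x _
    rw [← dist_iso_eq f]
    exact Finset.le_sup (f := fun x => Γ.dist (f v) x) (Finset.mem_univ (f x))
  apply le_antisymm _ (key f v)
  simpa using key f.symm (f v)

lemma ecc_center {V : Type*} [Fintype V] {Γ : SimpleGraph V} (hG : Γ.IsAcyclic) {v v' : V}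
    (hr : Γ.Reachable v v') (hd : 2 ≤ Γ.dist v v') (he : ecc Γ v' = ecc Γ v) :
    ∃ w, Γ.Reachable v w ∧ ecc Γ w < ecc Γ v := by
  obtain ⟨p, hp, hpl⟩ := hr.exists_path_of_dist
  have hle : ∀ a b, Γ.dist a b ≤ ecc Γ a := fun a b =>
    Finset.le_sup (f := fun x => Γ.dist a x) (Finset.mem_univ b)
  have hadj : ∀ i < p.length, Γ.Adj (p.getVert i) (p.getVert (i + 1)) := fun i hi =>
    p.adj_getVert_succ hi
  have h0 := hadj 0 (by omega)
  have hpos : 2 ≤ ecc Γ v := hd.trans (hle _ _)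
  rw [p.getVert_zero] at h0
  refine ⟨p.getVert 1, h0.reachable, ?_⟩
  rw [ecc, Finset.sup_lt_iff (by simp only [Nat.bot_eq_zero]; omega)]
  intro x _
  by_cases hx : Γ.Reachable x v
  · rcases hG.dist_eq_dist_add_one_of_adj_of_reachable x h0 hx with h | h
    · have := hle v x
      rw [SimpleGraph.dist_comm] at this ⊢
      simp only [zero_add] at h
      omega
    · have := dist_mono hG (u := x) p.length p.getVert (by simpa using hx) hadj (by
        intro i hi heq
        have := hp.getVert_injOn (by simp; omega) (by simp; omega) heq
        omega) (by simpa using h) p.length le_rfl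
      rw [p.getVert_length, p.getVert_zero] at this
      have h2 := hle v' x
      rw [SimpleGraph.dist_comm] at h2 ⊢
      simp only [zero_add] at h
      omega
  · rw [SimpleGraph.dist_eq_zero_of_not_reachable]
    · omega
    · intro h
      exact hx (h.symm.trans h0.symm.reachable)

lemma exists_center {V : Type*} [Fintype V] {Γ : SimpleGraph V} (hG : Γ.IsAcyclic) (c : V) :
    ∃ v, Γ.Reachable c v ∧ ∀ f : Γ ≃g Γ, (∃ d, Γ.Reachable c d ∧ f d = d) →
      f v = v ∨ Γ.Adj v (f v) := by
  classical
  obtain ⟨v, hv, hmin⟩ := Finset.exists_min_image (Finset.univ.filter fun x => Γ.Reachable c x)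
    (ecc Γ) ⟨c, by simp⟩
  simp only [Finset.mem_filter, Finset.mem_univ, true_and] at hv hmin
  refine ⟨v, hv, fun f ⟨d, hd, hfd⟩ => ?_⟩
  by_contra! hc
  have hdv : Γ.Reachable d (f v) := by
    have := (hd.symm.trans hv).map f.toHom
    simpa [hfd] using this
  have hr : Γ.Reachable v (f v) := (hv.symm.trans hd).trans hdv
  have h2 : 2 ≤ Γ.dist v (f v) := hr.one_lt_dist_of_ne_of_not_adj (Ne.symm hc.1) hc.2
  obtain ⟨w, hw, hlt⟩ := ecc_center hG hr h2 (ecc_iso f v)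
  exact absurd (hmin w (hv.trans hw)) (by omega)

/-- Conjugation as a graph automorphism. -/
def conjIso {G : Type*} [Group G] (g : G) : FG G ≃g FG G where
  toEquiv := (MulAut.conj g).mapSubgroup.toEquiv
  map_rel_iff' := by
    intro A B
    have hc : ∀ A : Subgroup G, Nat.card (A.map (MulAut.conj g).toMonoidHom) = Nat.card A :=
      fun A => Subgroup.card_map_of_injective (MulAut.conj g).injective
    change (FG G).Adj (A.map (MulAut.conj g).toMonoidHom) (B.map (MulAut.conj g).toMonoidHom) ↔ _
    simp only [FG, hc]
    refine and_congr_right fun _ => and_congr_right fun _ => and_congr_right fun _ => ?_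
    constructor
    · intro h a ha b hb
      have := h _ (Subgroup.mem_map_of_mem _ ha) _ (Subgroup.mem_map_of_mem _ hb)
      rw [← map_mul, ← map_mul] at this
      exact (MulAut.conj g).injective this
    · rintro h _ ⟨a, ha, rfl⟩ _ ⟨b, hb, rfl⟩
      rw [← map_mul, ← map_mul, h a ha b hb]

lemma conjIso_apply {G : Type*} [Group G] (g : G) (A : Subgroup G) :
    conjIso g A = A.map (MulAut.conj g).toMonoidHom := rfl

lemma conjIso_card {G : Type*} [Group G] (g : G) (A : Subgroup G) :
    Nat.card (conjIso g A : Subgroup G) = Nat.card A :=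
  Subgroup.card_map_of_injective (MulAut.conj g).injective

lemma conjIso_fix {G : Type*} [Group G] (g : G) (A : Subgroup G) (h : ∀ a ∈ A, g * a = a * g) :
    conjIso g A = A := by
  rw [conjIso_apply]
  ext x
  constructor
  · rintro ⟨a, ha, rfl⟩
    have : g * a * g⁻¹ = a := by rw [h a ha]; group
    simpa [this] using ha
  · intro hx
    refine ⟨x, hx, ?_⟩
    have : g * x * g⁻¹ = x := by rw [h x hx]; group
    simpa using this

lemma conjIso_norm {G : Type*} [Group G] (g : G) (A : Subgroup G) (h : conjIso g A = A) :
    g ∈ Subgroup.normalizer (A : Set G) := by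
  rw [conjIso_apply] at h
  rw [Subgroup.mem_normalizer_iff]
  intro x
  conv_rhs => rw [← h]
  constructor
  · intro hx; exact ⟨x, hx, by simp⟩
  · rintro ⟨y, hy, hxy⟩
    have : y = x := by simpa using hxy
    exact this ▸ hy

lemma self_comm {G : Type*} [Group G] {A : Subgroup G} (hA : (Nat.card A).Prime) {a b : G}
    (ha : a ∈ A) (hb : b ∈ A) : a * b = b * a := by
  obtain ⟨x, _, _, _, hx⟩ := exists_prime_gen hA
  rw [← hx] at ha hb
  exact commute_zpowers rfl a ha b hb

lemma no_long {G : Type*} [Group G] [Finite G] (hF : (FG G).IsAcyclic) (s : ℕ → Subgroup G)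
    (hs : ∀ i < 9, (FG G).Adj (s i) (s (i + 1))) (hb : ∀ i, i + 2 ≤ 9 → s i ≠ s (i + 2)) :
    False := by
  have : Fintype (Subgroup G) := Fintype.ofFinite _
  obtain ⟨v, hv, hfix⟩ := exists_center hF (s 0)
  have hreach : ∀ i ≤ 9, (FG G).Reachable (s 0) (s i) := by
    intro i
    induction i with
    | zero => intro _; rfl
    | succ k ih => intro hk; exact (ih (by omega)).trans (hs k (by omega)).reachable
  have hp : ∀ i ≤ 9, (Nat.card (s i)).Prime := by
    intro i hi
    rcases Nat.lt_or_ge i 9 with h | h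
    · exact (hs i h).1
    · obtain rfl : i = 9 := by omega
      exact (hs 8 (by norm_num)).2.1
  have hvfix : ∀ i ≤ 9, ∀ g ∈ s i, conjIso g v = v := by
    intro i hi g hg
    rcases hfix (conjIso g) ⟨s i, hreach i hi,
      conjIso_fix g _ fun a ha => self_comm (hp i hi) hg ha⟩ with h | h
    · exact h
    · exact absurd (conjIso_card g v).symm h.2.2.1
  -- increasing sequences of length 5
  have main : ∀ U : ℕ → Subgroup G, (∀ i ≤ 5, ∃ j ≤ 9, U i = s j) →
      (∀ i < 5, (FG G).Adj (U i) (U (i + 1))) →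
      (∀ i ≤ 5, (FG G).dist v (U i) = (FG G).dist v (U 0) + i) → False := by
    intro U hU hadj hd
    have hrU : ∀ i ≤ 5, (FG G).Reachable v (U i) := by
      intro i hi
      obtain ⟨j, hj, e⟩ := hU i hi
      rw [e]; exact hv.symm.trans (hreach j hj)
    refine final_contra U ((FG G).dist v) hadj hd ?_ ?_
    · intro i hi B hB
      rcases hF.dist_eq_dist_add_one_of_adj_of_reachable v hB (hrU i hi) with h | h <;> omega
    · intro i j hij hj g hg
      apply conjIso_norm
      obtain ⟨j', hj', e⟩ := hU j hj
      have hgv : conjIso g v = v := hvfix j' hj' g (e ▸ hg)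
      have hpj : (Nat.card (U j)).Prime := e ▸ hp j' hj'
      obtain ⟨k, rfl⟩ := Nat.exists_eq_add_of_le hij
      clear hij
      have : ∀ k i, i + k ≤ 5 → conjIso g (U (i + k)) = U (i + k) → conjIso g (U i) = U i := by
        intro k
        induction k with
        | zero => intro i _ h; exact h
        | succ k ih =>
          intro i hi h
          have h1 := ih (i + 1) (by omega) (by rw [show i + 1 + k = i + (k + 1) by omega]; exact h)
          have a1 := hadj i (by omega)
          have d1 := hd i (by omega)
          have d2 := hd (i + 1) (by omega)
          refine parent_unique hF (hrU (i + 1) (by omega)) (y := conjIso g (U i)) ?_ a1.symm ?_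
            (by omega)
          · have := (conjIso g).map_rel_iff.2 a1.symm
            rwa [h1] at this
          · have := dist_iso_eq (conjIso g) v (U i)
            rw [hgv] at this
            omega
      exact this k i hj (conjIso_fix g _ fun a ha => self_comm hpj hg ha)
  have step : ∀ i < 9, (FG G).dist v (s i) = (FG G).dist v (s (i + 1)) + 1 ∨
      (FG G).dist v (s (i + 1)) = (FG G).dist v (s i) + 1 := fun i hi =>
    hF.dist_eq_dist_add_one_of_adj_of_reachable v (hs i hi) (hv.symm.trans (hreach i hi.le))
  rcases step 4 (by norm_num) with h | h
  · -- decreasing at 4 : use s 5, s 4, ..., s 0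
    have hadj : ∀ i < 5, (FG G).Adj (s (5 - i)) (s (5 - (i + 1))) := by
      intro i hi
      have := (hs (5 - (i + 1)) (by omega)).symm
      rwa [show 5 - (i + 1) + 1 = 5 - i by omega] at this
    refine main (fun i => s (5 - i)) (fun i _ => ⟨5 - i, by omega, rfl⟩) hadj ?_
    refine dist_mono hF 5 _ (hv.symm.trans (hreach 5 (by omega))) hadj ?_ h
    intro i hi
    have := (hb (5 - (i + 2)) (by omega)).symm
    rwa [show 5 - (i + 2) + 2 = 5 - i by omega] at this
  · have hadj : ∀ i < 5, (FG G).Adj (s (4 + i)) (s (4 + (i + 1))) := fun i hi =>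
      hs (4 + i) (by omega)
    refine main (fun i => s (4 + i)) (fun i _ => ⟨4 + i, by omega, rfl⟩) hadj ?_
    exact dist_mono hF 5 _ (hv.symm.trans (hreach 4 (by omega))) hadj
      (fun i hi => hb (4 + i) (by omega)) h

lemma pg_adj {G : Type*} [Group G] {x y : G} : (powerGraph G).Adj x y ↔
    x ≠ y ∧ (x ∈ Subgroup.zpowers y ∨ y ∈ Subgroup.zpowers x) := by
  simp [powerGraph, SimpleGraph.fromRel_adj]

lemma zp_trans {G : Type*} [Group G] {x y z : G} (h1 : x ∈ Subgroup.zpowers y)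
    (h2 : y ∈ Subgroup.zpowers z) : x ∈ Subgroup.zpowers z :=
  (Subgroup.zpowers_le.2 h2) h1

lemma cyc_adj {N : ℕ} (hN : 3 ≤ N) (u v : Fin N) : (SimpleGraph.cycleGraph N).Adj u v ↔
    (u.val = v.val + 1 ∨ (u.val = 0 ∧ v.val + 1 = N)) ∨
    (v.val = u.val + 1 ∨ (v.val = 0 ∧ u.val + 1 = N)) := by
  have key : ∀ a b : Fin N, (a - b).val = 1 ↔ (a.val = b.val + 1 ∨ (a.val = 0 ∧ b.val + 1 = N)) := by
    intro a b
    have ha := a.2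
    have hb := b.2
    rw [Fin.val_sub]
    rcases Nat.lt_or_ge a.val b.val with h | h
    · rw [Nat.mod_eq_of_lt (by omega)]; omega
    · rw [show N - b.val + a.val = (a.val - b.val) + N by omega, Nat.add_mod_right,
        Nat.mod_eq_of_lt (by omega)]; omega
  rw [SimpleGraph.cycleGraph_adj', key, key]

/-- embeddings of cycles from a function on naturals -/
lemma embed_cycle {G : Type*} [Group G] (hch : IsChordal (powerGraph G)) {N : ℕ} (hN : 4 ≤ N)
    (f : ℕ → G) (r : ℕ → ℕ → Prop)
    (hr : ∀ k < N, ∀ l < N, (f k ∈ Subgroup.zpowers (f l) ↔ k = l ∨ r k l))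
    (hanti : ∀ k < N, ∀ l < N, r k l → ¬ r l k)
    (hadj : ∀ k < N, ∀ l < N, (r k l ∨ r l k) ↔
      (k = l + 1 ∨ (k = 0 ∧ l + 1 = N)) ∨ (l = k + 1 ∨ (l = 0 ∧ k + 1 = N))) : False := by
  have hinj : ∀ k < N, ∀ l < N, f k = f l → k = l := by
    intro k hk l hl h
    have h1 := (hr k hk l hl).1 (h ▸ Subgroup.mem_zpowers _)
    have h2 := (hr l hl k hk).1 (h ▸ Subgroup.mem_zpowers _)
    rcases h1 with h1 | h1
    · exact h1
    · rcases h2 with h2 | h2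
      · exact h2.symm
      · exact absurd h2 (hanti k hk l hl h1)
  refine (hch N hN).false ⟨⟨fun k => f k.val, fun k l h => Fin.ext (hinj _ k.2 _ l.2 h)⟩, ?_⟩
  intro k l
  change (powerGraph G).Adj (f k.val) (f l.val) ↔ _
  rw [pg_adj, cyc_adj (by omega), ← hadj _ k.2 _ l.2, hr _ k.2 _ l.2, hr _ l.2 _ k.2]
  constructor
  · rintro ⟨h1, h2⟩
    have : k.val ≠ l.val := fun h => h1 (by rw [h])
    rcases h2 with (h | h) | (h | h)
    · exact absurd h this
    · exact Or.inl h
    · exact absurd h.symm this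
    · exact Or.inr h
  · intro h
    refine ⟨fun he => ?_, by tauto⟩
    have he := hinj _ k.2 _ l.2 he
    have := (hadj _ k.2 _ l.2).1 h
    omega

lemma no_C4 {G : Type*} [Group G] (hch : IsChordal (powerGraph G)) {a b t s : G}
    (h1 : a ∈ Subgroup.zpowers t) (h2 : a ∈ Subgroup.zpowers s) (h3 : b ∈ Subgroup.zpowers t)
    (h4 : b ∈ Subgroup.zpowers s) (h5 : a ∉ Subgroup.zpowers b) (h6 : b ∉ Subgroup.zpowers a)
    (h7 : t ∉ Subgroup.zpowers s) (h8 : s ∉ Subgroup.zpowers t) : False := by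
  have e1 : t ∉ Subgroup.zpowers a := fun h => h6 (zp_trans h3 h)
  have e2 : t ∉ Subgroup.zpowers b := fun h => h5 (zp_trans h1 h)
  have e3 : s ∉ Subgroup.zpowers a := fun h => h6 (zp_trans h4 h)
  have e4 : s ∉ Subgroup.zpowers b := fun h => h5 (zp_trans h2 h)
  refine embed_cycle hch (N := 4) le_rfl
    (fun k => if k = 0 then a else if k = 1 then t else if k = 2 then b else s)
    (fun k l => k % 2 = 0 ∧ l % 2 = 1) ?_ ?_ ?_
  · intro k hk l hl
    interval_cases k <;> interval_cases l <;> simp [*, Subgroup.mem_zpowers]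
  · intros; omega
  · intros; omega

lemma F_acyclic {G : Type*} [Group G] [Finite G] (hch : IsChordal (powerGraph G)) :
    (FG G).IsAcyclic := by
  rw [SimpleGraph.isAcyclic_iff_free_cycleGraph]
  rintro n hn ⟨c⟩
  have hcadj : ∀ i j : Fin n, (SimpleGraph.cycleGraph n).Adj i j → (FG G).Adj (c i) (c j) :=
    fun i j h => c.toHom.map_rel h
  have hcinj : Function.Injective c := c.injective
  set nx : ℕ → ℕ := fun i => if i + 1 = n then 0 else i + 1 with hnx
  have hnxc : ∀ i, (i + 1 = n ∧ nx i = 0) ∨ (i + 1 ≠ n ∧ nx i = i + 1) := by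
    intro i; by_cases h : i + 1 = n <;> simp [hnx, h]
  have hnxlt : ∀ i < n, nx i < n := by
    intro i hi; simp only [hnx]; split_ifs <;> omega
  have hadjn : ∀ i (hi : i < n), (FG G).Adj (c ⟨i, hi⟩) (c ⟨nx i, hnxlt i hi⟩) := by
    intro i hi
    apply hcadj
    rw [cyc_adj hn]
    simp only [hnx]; split_ifs <;> omega
  have hprime : ∀ i : Fin n, (Nat.card (c i)).Prime := fun i => (hadjn i.1 i.2).1
  choose g hgm hg1 hgo hgz using fun i : Fin n => exists_prime_gen (hprime i)
  set X : ℕ → G := fun i => if h : i < n then g ⟨i, h⟩ else 1 with hX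
  have hXe : ∀ i (h : i < n), X i = g ⟨i, h⟩ := fun i h => by simp [hX, h]
  have hXo : ∀ i < n, (orderOf (X i)).Prime := by
    intro i hi; rw [hXe i hi, hgo]; exact hprime _
  have hXinj : ∀ i < n, ∀ j < n, X i ∈ Subgroup.zpowers (X j) → i = j := by
    intro i hi j hj h
    rw [hXe i hi, hXe j hj, hgz] at h
    have := mem_prime_gen (hprime _) h (hg1 _)
    rw [hgz] at this
    exact congrArg Fin.val (hcinj this)
  have hXc : ∀ i < n, Commute (X i) (X (nx i)) := by
    intro i hi
    rw [hXe i hi, hXe _ (hnxlt i hi)]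
    exact (hadjn i hi).2.2.2 _ (hgm _) _ (hgm _)
  have hXne : ∀ i < n, orderOf (X i) ≠ orderOf (X (nx i)) := by
    intro i hi
    rw [hXe i hi, hXe _ (hnxlt i hi), hgo, hgo]
    exact (hadjn i hi).2.2.1
  set T : ℕ → G := fun i => X i * X (nx i) with hT
  have hcop : ∀ i < n, (orderOf (X i)).Coprime (orderOf (X (nx i))) := fun i hi =>
    (Nat.coprime_primes (hXo i hi) (hXo _ (hnxlt i hi))).2 (hXne i hi)
  have hTo : ∀ i < n, orderOf (T i) = orderOf (X i) * orderOf (X (nx i)) := fun i hi =>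
    (hXc i hi).orderOf_mul_eq_mul_orderOf_of_coprime (hcop i hi)
  have powmem : ∀ x y : G, Commute x y → (orderOf x).Coprime (orderOf y) →
      x ∈ Subgroup.zpowers (x * y) := by
    intro x y hxy hco
    have h1 : (x * y) ^ orderOf y = x ^ orderOf y := by
      rw [hxy.mul_pow, pow_orderOf_eq_one, mul_one]
    have h2 : x ∈ Subgroup.zpowers (x ^ orderOf y) := by
      obtain ⟨m, hm⟩ := exists_pow_eq_self_of_coprime hco.symm
      exact Subgroup.mem_zpowers_iff.2 ⟨m, by exact_mod_cast hm⟩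
    rw [← h1] at h2
    exact zp_trans h2 (Subgroup.npow_mem_zpowers _ _)
  have ha1 : ∀ i < n, X i ∈ Subgroup.zpowers (T i) := fun i hi =>
    powmem _ _ (hXc i hi) (hcop i hi)
  have ha2 : ∀ i < n, X (nx i) ∈ Subgroup.zpowers (T i) := fun i hi => by
    have := powmem _ _ (hXc i hi).symm (hcop i hi).symm
    rwa [← (hXc i hi).eq] at this
  have hb : ∀ i < n, ∀ j < n, X j ∈ Subgroup.zpowers (T i) → j = i ∨ j = nx i := by
    intro i hi j hj h
    have hd := orderOf_dvd_of_mem_zpowers h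
    rw [hTo i hi] at hd
    rcases (hXo j hj).dvd_mul.1 hd with hd | hd
    · exact Or.inl (hXinj j hj i hi (cyc_mem h (ha1 i hi) hd))
    · exact Or.inr (hXinj j hj _ (hnxlt i hi) (cyc_mem h (ha2 i hi) hd))
  have hd : ∀ i < n, ∀ j < n, T j ∈ Subgroup.zpowers (T i) → j = i := by
    intro i hi j hj h
    have h1 := hb i hi j hj (zp_trans (ha1 j hj) h)
    have h2 := hb i hi _ (hnxlt j hj) (zp_trans (ha2 j hj) h)
    have n1 := hnxc i
    have n2 := hnxc j
    omega
  have he : ∀ i < n, ∀ j < n, T j ∉ Subgroup.zpowers (X i) := by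
    intro i hi j hj h
    have h1 := hXinj j hj i hi (zp_trans (ha1 j hj) h)
    have h2 := hXinj _ (hnxlt j hj) i hi (zp_trans (ha2 j hj) h)
    simp only [hnx] at h1 h2
    split_ifs at h2 <;> omega
  refine embed_cycle hch (N := 2 * n) (by omega)
    (fun k => if k % 2 = 0 then X (k / 2) else T (k / 2))
    (fun k l => k % 2 = 0 ∧ l % 2 = 1 ∧ (k / 2 = l / 2 ∨ k / 2 = nx (l / 2))) ?_ ?_ ?_
  · intro k hk l hl
    have hk2 : k / 2 < n := by omega
    have hl2 : l / 2 < n := by omega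
    rcases Nat.mod_two_eq_zero_or_one k with h | h <;>
    rcases Nat.mod_two_eq_zero_or_one l with h' | h' <;>
    simp only [h, h', if_true, one_ne_zero, if_false, true_and, false_and, or_false,
      zero_ne_one]
    · constructor
      · intro hm; have := hXinj _ hk2 _ hl2 hm; omega
      · rintro rfl; exact Subgroup.mem_zpowers _
    · constructor
      · intro hm; exact Or.inr (hb _ hl2 _ hk2 hm)
      · rintro (hm | hm | hm)
        · omega
        · rw [hm]; exact ha1 _ hl2
        · rw [hm]; exact ha2 _ hl2
    · constructor
      · intro hm; exact absurd hm (he _ hl2 _ hk2)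
      · intro hm; omega
    · constructor
      · intro hm; have := hd _ hl2 _ hk2 hm; omega
      · rintro rfl; exact Subgroup.mem_zpowers _
  · intros; omega
  · intro k hk l hl
    simp only [hnx]
    split_ifs <;> omega

lemma no_zigzag {G : Type*} [Group G] [Finite G] (hch : IsChordal (powerGraph G)) (b t : ℕ → G)
    (h1 : ∀ i < 10, b i ∈ Subgroup.zpowers (t i))
    (h2 : ∀ i < 9, b (i + 1) ∈ Subgroup.zpowers (t i))
    (hb : ∀ i < 10, ∀ j < 10, i ≠ j → b i ∉ Subgroup.zpowers (b j))
    (ht : ∀ i < 10, ∀ j < 10, i ≠ j → t i ∉ Subgroup.zpowers (t j)) : False := by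
  have hpe : ∀ (x : G) (p : ℕ), p.Prime → p ∣ orderOf x →
      ∃ y ∈ Subgroup.zpowers x, orderOf y = p := by
    intro x p hp hd
    refine ⟨x ^ (orderOf x / p), Subgroup.npow_mem_zpowers _ _, ?_⟩
    exact orderOf_pow_orderOf_div (orderOf_pos x).ne' hd
  have hinc : ∀ (x y : G) (p q : ℕ), p.Prime → q.Prime → p ≠ q → orderOf x = p → orderOf y = q →
      x ∉ Subgroup.zpowers y := by
    intro x y p q hp hq hpq hx hy h
    have := orderOf_dvd_of_mem_zpowers h
    rw [hx, hy] at this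
    exact hpq ((Nat.prime_dvd_prime_iff_eq hp hq).1 this)
  have hb1 : ∀ i < 10, orderOf (b i) ≠ 1 := by
    intro i hi h
    rw [orderOf_eq_one_iff] at h
    have := hb i hi (if i = 0 then 1 else 0) (by split_ifs <;> omega) (by split_ifs <;> omega)
    rw [h] at this
    exact this (one_mem _)
  have hpp : ∀ i < 9, ∀ p q : ℕ, p.Prime → q.Prime → p ∣ orderOf (b (i + 1)) →
      q ∣ orderOf (b (i + 1)) → p = q := by
    intro i hi p q hp hq hdp hdq
    by_contra hne
    obtain ⟨x, hx, hxo⟩ := hpe _ p hp hdp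
    obtain ⟨y, hy, hyo⟩ := hpe _ q hq hdq
    have e1 := h1 (i + 1) (by omega)
    have e2 := h2 i hi
    exact no_C4 hch (zp_trans hx e1) (zp_trans hx e2) (zp_trans hy e1) (zp_trans hy e2)
      (hinc x y p q hp hq hne hxo hyo) (hinc y x q p hq hp (Ne.symm hne) hyo hxo)
      (ht _ (by omega) _ (by omega) (by omega)) (ht _ (by omega) _ (by omega) (by omega))
  have hdiff : ∀ i < 9, ∃ q : ℕ, q.Prime ∧ q ∣ orderOf (b i) ∧ ¬ q ∣ orderOf (b (i + 1)) := by
    intro i hi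
    by_contra! hc
    set p := (orderOf (b (i + 1))).minFac with hpdef
    have hp : p.Prime := Nat.minFac_prime (hb1 _ (by omega))
    have hpd : p ∣ orderOf (b (i + 1)) := Nat.minFac_dvd _
    have e1 : orderOf (b i) = p ^ (orderOf (b i)).primeFactorsList.length :=
      Nat.eq_prime_pow_of_unique_prime_dvd (orderOf_pos _).ne' fun {d} hd hdd =>
        hpp i hi d p hd hp (hc d hd hdd) hpd
    have e2 : orderOf (b (i + 1)) = p ^ (orderOf (b (i + 1))).primeFactorsList.length :=
      Nat.eq_prime_pow_of_unique_prime_dvd (orderOf_pos _).ne' fun {d} hd hdd =>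
        hpp i hi d p hd hp hdd hpd
    rcases le_total (orderOf (b i)).primeFactorsList.length
      (orderOf (b (i + 1))).primeFactorsList.length with h | h
    · have hdv : orderOf (b i) ∣ orderOf (b (i + 1)) := by
        rw [e1, e2]; exact pow_dvd_pow _ h
      exact hb _ (by omega) _ (by omega) (by omega) (cyc_mem (h1 i (by omega)) (h2 i hi) hdv)
    · have hdv : orderOf (b (i + 1)) ∣ orderOf (b i) := by
        rw [e1, e2]; exact pow_dvd_pow _ h
      exact hb _ (by omega) _ (by omega) (by omega) (cyc_mem (h2 i hi) (h1 i (by omega)) hdv)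
  have hP : ∀ i, ∃ y : G, i < 10 → (orderOf y).Prime ∧ y ∈ Subgroup.zpowers (b i) ∧
      (i < 9 → ¬ orderOf y ∣ orderOf (b (i + 1))) := by
    intro i
    by_cases hi : i < 9
    · obtain ⟨q, hq, hd, hnd⟩ := hdiff i hi
      obtain ⟨y, hy, hyo⟩ := hpe _ q hq hd
      exact ⟨y, fun _ => ⟨hyo ▸ hq, hy, fun _ => hyo ▸ hnd⟩⟩
    · by_cases hi' : i < 10
      · obtain ⟨y, hy, hyo⟩ := hpe (b i) _ (Nat.minFac_prime (hb1 i hi')) (Nat.minFac_dvd _)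
        exact ⟨y, fun _ => ⟨hyo ▸ Nat.minFac_prime (hb1 i hi'), hy, fun h => absurd h hi⟩⟩
      · exact ⟨1, fun h => absurd h hi'⟩
  choose y hy using hP
  have hne : ∀ i < 9, orderOf (y i) ≠ orderOf (y (i + 1)) := by
    intro i hi h
    apply (hy i (by omega)).2.2 hi
    rw [h]
    exact orderOf_dvd_of_mem_zpowers (hy (i + 1) (by omega)).2.1
  refine no_long (F_acyclic hch) (fun i => Subgroup.zpowers (y i)) ?_ ?_
  · intro i hi
    refine ⟨?_, ?_, ?_, ?_⟩
    · rw [Nat.card_zpowers]; exact (hy i (by omega)).1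
    · rw [Nat.card_zpowers]; exact (hy _ (by omega)).1
    · rw [Nat.card_zpowers, Nat.card_zpowers]; exact hne i hi
    · intro u hu v hv
      exact commute_zpowers rfl u (zp_trans hu (zp_trans (hy i (by omega)).2.1 (h1 i (by omega))))
        v (zp_trans hv (zp_trans (hy _ (by omega)).2.1 (h2 i hi)))
  · intro i hi he
    have he : Subgroup.zpowers (y i) = Subgroup.zpowers (y (i + 2)) := he
    have m0 : y i ∈ Subgroup.zpowers (t i) :=
      zp_trans (hy i (by omega)).2.1 (h1 i (by omega))
    have m1 : y i ∈ Subgroup.zpowers (t (i + 1)) := by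
      have : y i ∈ Subgroup.zpowers (y (i + 2)) := he ▸ Subgroup.mem_zpowers _
      exact zp_trans this (zp_trans (hy (i + 2) (by omega)).2.1 (h2 (i + 1) (by omega)))
    have m2 : y (i + 1) ∈ Subgroup.zpowers (t i) :=
      zp_trans (hy (i + 1) (by omega)).2.1 (h2 i (by omega))
    have m3 : y (i + 1) ∈ Subgroup.zpowers (t (i + 1)) :=
      zp_trans (hy (i + 1) (by omega)).2.1 (h1 (i + 1) (by omega))
    have p0 := (hy i (by omega)).1
    have p1 := (hy (i + 1) (by omega)).1
    have hn := hne i (by omega)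
    exact no_C4 hch m0 m1 m2 m3 (hinc _ _ _ _ p0 p1 hn rfl rfl)
      (hinc _ _ _ _ p1 p0 hn.symm rfl rfl)
      (ht _ (by omega) _ (by omega) (by omega)) (ht _ (by omega) _ (by omega) (by omega))

lemma no_path {G : Type*} [Group G] [Finite G] (hch : IsChordal (powerGraph G)) :
    IsEmpty (SimpleGraph.pathGraph 20 ↪g powerGraph G) := by
  refine ⟨fun e => ?_⟩
  have main : ∀ x : ℕ → G,
      (∀ i < 20, ∀ j < 20, i ≠ j →
        ((x i ∈ Subgroup.zpowers (x j) ∨ x j ∈ Subgroup.zpowers (x i)) ↔ i + 1 = j ∨ j + 1 = i)) →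
      (∀ i < 19, i % 2 = 0 → x i ∈ Subgroup.zpowers (x (i + 1))) →
      (∀ i < 19, i % 2 = 1 → x (i + 1) ∈ Subgroup.zpowers (x i)) → False := by
    intro x hx hev hod
    refine no_zigzag hch (fun i => x (2 * i)) (fun i => x (2 * i + 1)) ?_ ?_ ?_ ?_
    · intro i hi; exact hev (2 * i) (by omega) (by omega)
    · intro i hi; exact hod (2 * i + 1) (by omega) (by omega)
    · intro i hi j hj hij h
      have := (hx (2 * i) (by omega) (2 * j) (by omega) (by omega)).1 (Or.inl h)
      omega
    · intro i hi j hj hij h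
      have := (hx (2 * i + 1) (by omega) (2 * j + 1) (by omega) (by omega)).1 (Or.inl h)
      omega
  set x : ℕ → G := fun i => if h : i < 20 then e ⟨i, h⟩ else 1 with hxdef
  have hx : ∀ i < 20, ∀ j < 20, i ≠ j →
        ((x i ∈ Subgroup.zpowers (x j) ∨ x j ∈ Subgroup.zpowers (x i)) ↔
          i + 1 = j ∨ j + 1 = i) := by
    intro i hi j hj hij
    have := e.map_adj_iff (v := ⟨i, hi⟩) (w := ⟨j, hj⟩)
    rw [pg_adj, SimpleGraph.pathGraph_adj] at this
    simp only [hxdef, hi, hj, dif_pos]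
    rw [← this]
    constructor
    · intro h
      exact ⟨fun h' => hij (congrArg Fin.val (e.injective h')), h⟩
    · exact fun h => h.2
  have hor : ∀ i < 19, x i ∈ Subgroup.zpowers (x (i + 1)) ∨ x (i + 1) ∈ Subgroup.zpowers (x i) :=
    fun i hi => (hx i (by omega) (i + 1) (by omega) (by omega)).2 (Or.inl rfl)
  have hUD : ∀ i < 18, x i ∈ Subgroup.zpowers (x (i + 1)) →
      x (i + 2) ∈ Subgroup.zpowers (x (i + 1)) := by
    intro i hi h
    rcases hor (i + 1) (by omega) with h' | h'
    · have := (hx i (by omega) (i + 2) (by omega) (by omega)).1 (Or.inl (zp_trans h h'))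
      omega
    · exact h'
  have hDU : ∀ i < 18, x (i + 1) ∈ Subgroup.zpowers (x i) →
      x (i + 1) ∈ Subgroup.zpowers (x (i + 2)) := by
    intro i hi h
    rcases hor (i + 1) (by omega) with h' | h'
    · exact h'
    · have := (hx i (by omega) (i + 2) (by omega) (by omega)).1 (Or.inr (zp_trans h' h))
      omega
  rcases hor 0 (by norm_num) with h0 | h0
  · have : ∀ i < 19, (i % 2 = 0 → x i ∈ Subgroup.zpowers (x (i + 1))) ∧
        (i % 2 = 1 → x (i + 1) ∈ Subgroup.zpowers (x i)) := by
      intro i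
      induction i with
      | zero => intro _; exact ⟨fun _ => h0, fun h => by omega⟩
      | succ k ih =>
        intro hk
        have := ih (by omega)
        exact ⟨fun h => hDU k (by omega) (this.2 (by omega)),
          fun h => hUD k (by omega) (this.1 (by omega))⟩
    exact main x hx (fun i hi => (this i hi).1) (fun i hi => (this i hi).2)
  · have : ∀ i < 19, (i % 2 = 1 → x i ∈ Subgroup.zpowers (x (i + 1))) ∧
        (i % 2 = 0 → x (i + 1) ∈ Subgroup.zpowers (x i)) := by
      intro i
      induction i with
      | zero => intro _; exact ⟨fun h => by omega, fun _ => h0⟩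
      | succ k ih =>
        intro hk
        have := ih (by omega)
        exact ⟨fun h => hDU k (by omega) (this.2 (by omega)),
          fun h => hUD k (by omega) (this.1 (by omega))⟩
    refine main (fun i => x (19 - i)) ?_ ?_ ?_
    · intro i hi j hj hij
      rw [hx (19 - i) (by omega) (19 - j) (by omega) (by omega)]
      omega
    · intro i hi h
      have := (this (19 - (i + 1)) (by omega)).2 (by omega)
      rwa [show 19 - (i + 1) + 1 = 19 - i by omega] at this
    · intro i hi h
      have := (this (19 - (i + 1)) (by omega)).1 (by omega)
      rwa [show 19 - (i + 1) + 1 = 19 - i by omega] at this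

theorem stmt1 (G : Type*) [Group G] [Fintype G] :
    IsChordal (powerGraph G) ↔
      ((∀ n : ℕ, 4 ≤ n → n ≤ 20 → IsEmpty (SimpleGraph.cycleGraph n ↪g powerGraph G)) ∧
        IsEmpty (SimpleGraph.pathGraph 20 ↪g powerGraph G)) := by
  constructor
  · intro h
    exact ⟨fun n hn _ => h n hn, no_path h⟩
  · rintro ⟨h1, h2⟩ n hn
    rcases Nat.lt_or_ge 20 n with h | h
    · refine ⟨fun e => h2.false ?_⟩
      refine SimpleGraph.Embedding.comp e (⟨⟨fun i => ⟨i.val, by omega⟩, ?_⟩, ?_⟩ :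
        SimpleGraph.pathGraph 20 ↪g SimpleGraph.cycleGraph n)
      · intro i j hij
        have : i.val = j.val := by simpa using hij
        exact Fin.ext this
      · intro i j
        change (SimpleGraph.cycleGraph n).Adj ⟨i.val, by omega⟩ ⟨j.val, by omega⟩ ↔ _
        rw [cyc_adj (by omega), SimpleGraph.pathGraph_adj]
        have := i.2
        have := j.2
        simp only
        omega
    · exact h1 n hn h
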